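/- arXiv:2209.04058 — 2 statements merged into one kernel-verified Lean document; each statement's English description precedes it below -/
import Mathlib

section
/- The mechanism SimpleScaledGreedy is 2α-consistent: if it is run on an instance p and predicted instance p̂ with p̂ = p, using a predicted schedule x̂ satisfying MS(p̂, x̂) ≤ α·OPT(p̂) for some α ≥ 1, then the allocation x it outputs satisfies MS(p, x) ≤ 2α·OPT(p). -/
open scoped Classical
noncomputable section
variable {n m : ℕ}

/-- The makespan of allocation `a` under instance `p`. -/
def MS [NeZero n] (p : Fin n → Fin m → ℝ) (a : Fin m → Fin n) : ℝ :=
  Finset.univ.sup' Finset.univ_nonempty fun i => ∑ j, if a j = i then p i j else 0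

/-- The optimal makespan of instance `p`. -/
def OPT [NeZero n] (p : Fin n → Fin m → ℝ) : ℝ :=
  Finset.univ.inf' Finset.univ_nonempty fun a : Fin m → Fin n => MS p a

/-- The scalars used by `SimpleScaledGreedy`. -/
def ssgR (phat : Fin n → Fin m → ℝ) (xhat : Fin m → Fin n) (i : Fin n) (j : Fin m) : ℝ :=
  max 1 (min (phat (xhat j) j / phat i j) (n : ℝ))

lemma exists_argmin [NeZero n] (v : Fin n → ℝ) :
    (Finset.univ.filter fun i => ∀ i', v i ≤ v i').Nonempty := by
  obtain ⟨i, -, hi⟩ := Finset.exists_min_image Finset.univ v Finset.univ_nonempty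
  exact ⟨i, by
    simp only [Finset.mem_filter, Finset.mem_univ, true_and]
    exact fun i' => hi i' (Finset.mem_univ i')⟩

/-- The allocation computed by `SimpleScaledGreedy`: job `j` goes to a machine minimizing
`r(i,j)·p(i,j)`, with ties broken in favor of the predicted machine `x̂ j` and otherwise
in favor of the smallest-index machine. -/
def ssgAssign [NeZero n] (p phat : Fin n → Fin m → ℝ) (xhat : Fin m → Fin n) (j : Fin m) :
    Fin n :=
  let v : Fin n → ℝ := fun i => ssgR phat xhat i j * p i j
  if ∀ i, v (xhat j) ≤ v i then xhat j
  else (Finset.univ.filter fun i => ∀ i', v i ≤ v i').min' (exists_argmin v)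

/-!
With `p̂ = p` the predicted machine of a job has scalar `1`, so a job leaves it only for a machine
on which the cap `n` is active, that is, where its processing time shrinks by a factor of more
than `n`. Hence the moved jobs altogether add at most `1 / n` of the total processing time of the
predicted schedule to any load, and this average load is at most the predicted makespan.
-/

section Makespan

/-- The load of machine `i` under allocation `a`: the quantity maximized over `i` in `MS`. -/
def load (p : Fin n → Fin m → ℝ) (a : Fin m → Fin n) (i : Fin n) : ℝ :=
  ∑ j, if a j = i then p i j else 0

lemma load_le_MS [NeZero n] (p : Fin n → Fin m → ℝ) (a : Fin m → Fin n) (i : Fin n) :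
    load p a i ≤ MS p a :=
  Finset.le_sup' (load p a) (Finset.mem_univ i)

lemma MS_le_of_forall_load_le [NeZero n] {p : Fin n → Fin m → ℝ} {a : Fin m → Fin n} {B : ℝ}
    (h : ∀ i, load p a i ≤ B) : MS p a ≤ B :=
  Finset.sup'_le _ _ fun i _ => h i

lemma sum_load (p : Fin n → Fin m → ℝ) (a : Fin m → Fin n) :
    ∑ i, load p a i = ∑ j, p (a j) j := by
  simp only [load]
  rw [Finset.sum_comm]
  simp only [Finset.sum_ite_eq, Finset.mem_univ, if_true]

lemma sum_processing_le_card_mul_MS [NeZero n] (p : Fin n → Fin m → ℝ) (a : Fin m → Fin n) :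
    ∑ j, p (a j) j ≤ n * MS p a := by
  calc ∑ j, p (a j) j = ∑ i, load p a i := (sum_load p a).symm
    _ ≤ ∑ _i : Fin n, MS p a := Finset.sum_le_sum fun i _ => load_le_MS p a i
    _ = n * MS p a := by simp

variable {p : Fin n → Fin m → ℝ} {a x : Fin m → Fin n} {c : ℝ}

lemma load_le_load_add_sum_div (hp : ∀ i j, 0 ≤ p i j) (hc : 0 < c)
    (hmove : ∀ j, a j ≠ x j → c * p (a j) j ≤ p (x j) j) (i : Fin n) :
    load p a i ≤ load p x i + (∑ j, p (x j) j) / c := by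
  have contribution_le (j : Fin m) :
      (if a j = i then p i j else 0) ≤ (if x j = i then p i j else 0) + p (x j) j / c := by
    have quotient_nonneg : 0 ≤ p (x j) j / c := div_nonneg (hp _ _) hc.le
    have contribution_nonneg : 0 ≤ if x j = i then p i j else 0 := by
      split_ifs
      exacts [hp i j, le_rfl]
    split_ifs at contribution_nonneg ⊢ with ha hx
    · linarith
    · subst ha
      simpa only [zero_add] using (le_div_iff₀' hc).mpr (hmove j (Ne.symm hx))
    all_goals linarith
  calc load p a i ≤ ∑ j, ((if x j = i then p i j else 0) + p (x j) j / c) :=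
        Finset.sum_le_sum fun j _ => contribution_le j
    _ = load p x i + (∑ j, p (x j) j) / c := by
        rw [Finset.sum_add_distrib, ← Finset.sum_div, load]

lemma MS_le_one_add_div_mul_MS [NeZero n] (hp : ∀ i j, 0 ≤ p i j) (hc : 0 < c)
    (hmove : ∀ j, a j ≠ x j → c * p (a j) j ≤ p (x j) j) :
    MS p a ≤ (1 + n / c) * MS p x := by
  refine MS_le_of_forall_load_le fun i => ?_
  calc load p a i ≤ load p x i + (∑ j, p (x j) j) / c := load_le_load_add_sum_div hp hc hmove i
    _ ≤ MS p x + n * MS p x / c := by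
        gcongr
        exacts [load_le_MS p x i, sum_processing_le_card_mul_MS p x]
    _ = (1 + n / c) * MS p x := by ring

end Makespan

section SimpleScaledGreedy

lemma ssgAssign_scaled_lt_of_ne [NeZero n] {p phat : Fin n → Fin m → ℝ} {xhat : Fin m → Fin n}
    {j : Fin m} (hne : ssgAssign p phat xhat j ≠ xhat j) :
    ssgR phat xhat (ssgAssign p phat xhat j) j * p (ssgAssign p phat xhat j) j
      < ssgR phat xhat (xhat j) j * p (xhat j) j := by
  let v : Fin n → ℝ := fun i => ssgR phat xhat i j * p i j
  have predicted_not_min : ¬ ∀ i, v (xhat j) ≤ v i := fun h => hne (if_pos h)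
  have assign_eq : ssgAssign p phat xhat j = Finset.min' _ (exists_argmin v) :=
    if_neg predicted_not_min
  have assign_min : ∀ i, v (ssgAssign p phat xhat j) ≤ v i := by
    rw [assign_eq]
    exact (Finset.mem_filter.mp (Finset.min'_mem _ (exists_argmin v))).2
  obtain ⟨i, hi⟩ := not_forall.mp predicted_not_min
  exact (assign_min i).trans_lt (not_le.mp hi)

lemma ssgR_predicted {phat : Fin n → Fin m → ℝ} {xhat : Fin m → Fin n} {j : Fin m}
    (h : phat (xhat j) j ≠ 0) : ssgR phat xhat (xhat j) j = 1 := by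
  have one_le_card : (1 : ℝ) ≤ n := Nat.one_le_cast.mpr (xhat j).pos
  rw [ssgR, div_self h, min_eq_left one_le_card, max_self]

lemma min_le_ssgR_mul {phat : Fin n → Fin m → ℝ} {i : Fin n} {j : Fin m}
    (h : 0 < phat i j) (xhat : Fin m → Fin n) :
    min (phat (xhat j) j) (n * phat i j) ≤ ssgR phat xhat i j * phat i j := by
  calc min (phat (xhat j) j) (n * phat i j)
      = min (phat (xhat j) j / phat i j) n * phat i j := by
        rw [min_mul_of_nonneg _ _ h.le, div_mul_cancel₀ _ h.ne']
    _ ≤ ssgR phat xhat i j * phat i j := mul_le_mul_of_nonneg_right (le_max_right _ _) h.le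

lemma card_mul_lt_of_ssgAssign_ne [NeZero n] {p : Fin n → Fin m → ℝ} {xhat : Fin m → Fin n}
    {j : Fin m} (hp : ∀ i, 0 < p i j) (hne : ssgAssign p p xhat j ≠ xhat j) :
    n * p (ssgAssign p p xhat j) j < p (xhat j) j := by
  have min_lt : min (p (xhat j) j) (n * p (ssgAssign p p xhat j) j) < p (xhat j) j := by
    calc _ ≤ ssgR p xhat (ssgAssign p p xhat j) j * p (ssgAssign p p xhat j) j :=
          min_le_ssgR_mul (hp _) xhat
      _ < ssgR p xhat (xhat j) j * p (xhat j) j := ssgAssign_scaled_lt_of_ne hne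
      _ = p (xhat j) j := by rw [ssgR_predicted (hp _).ne', one_mul]
  exact (min_lt_iff.mp min_lt).resolve_left (lt_irrefl _)

lemma MS_ssgAssign_le_two_mul_MS [NeZero n] {p : Fin n → Fin m → ℝ} (hp : ∀ i j, 0 < p i j)
    (xhat : Fin m → Fin n) : MS p (ssgAssign p p xhat) ≤ 2 * MS p xhat := by
  have card_pos : (0 : ℝ) < n := Nat.cast_pos.mpr (NeZero.pos n)
  calc MS p (ssgAssign p p xhat) ≤ (1 + n / n) * MS p xhat :=
        MS_le_one_add_div_mul_MS (fun i j => (hp i j).le) card_pos fun j hne =>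
          (card_mul_lt_of_ssgAssign_ne (fun i => hp i j) hne).le
    _ = 2 * MS p xhat := by rw [div_self card_pos.ne', one_add_one_eq_two]

end SimpleScaledGreedy

/-- `SimpleScaledGreedy` is `2α`-consistent: when `p̂ = p` and the predicted
schedule satisfies `MS(p̂,x̂) ≤ α·OPT(p̂)`, the output allocation has makespan at most
`2α·OPT(p)`. -/
theorem ssg_consistency [NeZero n]
    (p phat : Fin n → Fin m → ℝ) (xhat : Fin m → Fin n) (α : ℝ)
    (hp : ∀ i j, 0 < p i j) (hphat : ∀ i j, 0 < phat i j)
    (hα : 1 ≤ α) (hMS : MS phat xhat ≤ α * OPT phat)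
    (hpred : phat = p) :
    MS p (ssgAssign p phat xhat) ≤ 2 * α * OPT p := by
  subst hpred
  calc MS phat (ssgAssign phat phat xhat) ≤ 2 * MS phat xhat := MS_ssgAssign_le_two_mul_MS hp xhat
    _ ≤ 2 * (α * OPT phat) := mul_le_mul_of_nonneg_left hMS zero_le_two
    _ = 2 * α * OPT phat := (mul_assoc _ _ _).symm
end
end

section
/- The mechanism SimpleScaledGreedy is n²-robust: for every instance p and every predicted instance p̂ (with any predicted schedule x̂), the allocation x it outputs satisfies MS(p, x) ≤ n²·OPT(p). -/
open scoped Classical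
noncomputable section
variable {n m : ℕ}

/-!
All scalars lie in `[1, n]`, so minimizing `r(i,j)·p(i,j)` puts every job on a machine where its
processing time is within a factor `n` of the smallest possible. The makespan is at most the total
processing time of all jobs, which is thus at most `n` times that of an optimal allocation; the
latter is the sum of the `n` machine loads, each at most `OPT(p)`.
-/

/-- The load of machine `i` under allocation `a`: the total processing time of the jobs that `a`
assigns to `i`. The makespan `MS p a` is the maximum of these loads. -/
def machineLoad (p : Fin n → Fin m → ℝ) (a : Fin m → Fin n) (i : Fin n) : ℝ :=
  ∑ j, if a j = i then p i j else 0

section Makespan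

variable (p : Fin n → Fin m → ℝ) (a : Fin m → Fin n)

lemma sum_machineLoad : ∑ i, machineLoad p a i = ∑ j, p (a j) j := by
  simp only [machineLoad]
  rw [Finset.sum_comm]
  simp

lemma machineLoad_le_MS [NeZero n] (i : Fin n) : machineLoad p a i ≤ MS p a :=
  Finset.le_sup' (machineLoad p a) (Finset.mem_univ i)

lemma sum_le_numMachines_mul_MS [NeZero n] : ∑ j, p (a j) j ≤ n * MS p a :=
  calc ∑ j, p (a j) j = ∑ i, machineLoad p a i := (sum_machineLoad p a).symm
    _ ≤ ∑ _i : Fin n, MS p a := Finset.sum_le_sum fun i _ => machineLoad_le_MS p a i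
    _ = n * MS p a := by simp

lemma exists_MS_eq_OPT [NeZero n] : ∃ b : Fin m → Fin n, MS p b = OPT p := by
  obtain ⟨b, -, hb⟩ := Finset.exists_mem_eq_inf' Finset.univ_nonempty
    (fun a : Fin m → Fin n => MS p a)
  exact ⟨b, hb.symm⟩

variable {p}

lemma machineLoad_nonneg (hp : ∀ i j, 0 ≤ p i j) (i : Fin n) : 0 ≤ machineLoad p a i :=
  Finset.sum_nonneg fun j _ => ite_nonneg (hp i j) le_rfl

lemma MS_le_sum [NeZero n] (hp : ∀ i j, 0 ≤ p i j) : MS p a ≤ ∑ j, p (a j) j := by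
  rw [← sum_machineLoad]
  exact Finset.sup'_le _ _ fun i hi =>
    Finset.single_le_sum (fun i' _ => machineLoad_nonneg a hp i') hi

variable {a}

lemma MS_le_mul_OPT_of_forall_le_mul [NeZero n] (hp : ∀ i j, 0 ≤ p i j) {c : ℝ} (hc : 0 ≤ c)
    (ha : ∀ i j, p (a j) j ≤ c * p i j) :
    MS p a ≤ c * n * OPT p := by
  obtain ⟨b, hb⟩ := exists_MS_eq_OPT p
  calc MS p a ≤ ∑ j, p (a j) j := MS_le_sum a hp
    _ ≤ ∑ j, c * p (b j) j := Finset.sum_le_sum fun j _ => ha (b j) j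
    _ = c * ∑ j, p (b j) j := (Finset.mul_sum ..).symm
    _ ≤ c * (n * MS p b) := mul_le_mul_of_nonneg_left (sum_le_numMachines_mul_MS p b) hc
    _ = c * n * OPT p := by rw [hb, mul_assoc]

end Makespan

section SimpleScaledGreedy

variable (phat : Fin n → Fin m → ℝ) (xhat : Fin m → Fin n) (i : Fin n) (j : Fin m)

lemma one_le_ssgR : 1 ≤ ssgR phat xhat i j :=
  le_max_left _ _

lemma ssgR_le_numMachines [NeZero n] : ssgR phat xhat i j ≤ n :=
  max_le (Nat.one_le_cast.2 NeZero.one_le) (min_le_right _ _)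

lemma ssgR_mul_ssgAssign_le [NeZero n] (p : Fin n → Fin m → ℝ) :
    ssgR phat xhat (ssgAssign p phat xhat j) j * p (ssgAssign p phat xhat j) j
      ≤ ssgR phat xhat i j * p i j := by
  let v : Fin n → ℝ := fun i => ssgR phat xhat i j * p i j
  change v (ssgAssign p phat xhat j) ≤ v i
  by_cases hxhat : ∀ i, v (xhat j) ≤ v i
  · rw [show ssgAssign p phat xhat j = xhat j from if_pos hxhat]
    exact hxhat i
  · rw [show ssgAssign p phat xhat j = Finset.min' _ (exists_argmin v) from if_neg hxhat]
    exact (Finset.mem_filter.1 (Finset.min'_mem _ (exists_argmin v))).2 i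

lemma processingTime_ssgAssign_le [NeZero n] {p : Fin n → Fin m → ℝ} (hp : ∀ i j, 0 ≤ p i j) :
    p (ssgAssign p phat xhat j) j ≤ n * p i j :=
  calc p (ssgAssign p phat xhat j) j
      ≤ ssgR phat xhat (ssgAssign p phat xhat j) j * p (ssgAssign p phat xhat j) j :=
        le_mul_of_one_le_left (hp _ _) (one_le_ssgR ..)
    _ ≤ ssgR phat xhat i j * p i j := ssgR_mul_ssgAssign_le phat xhat i j p
    _ ≤ n * p i j := mul_le_mul_of_nonneg_right (ssgR_le_numMachines ..) (hp _ _)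

end SimpleScaledGreedy

/-- `SimpleScaledGreedy` is `n²`-robust: for every instance `p` and every
prediction `p̂` (with any predicted schedule `x̂`), its output allocation has makespan at most
`n²·OPT(p)`. -/
theorem ssg_robustness [NeZero n]
    (p phat : Fin n → Fin m → ℝ) (xhat : Fin m → Fin n)
    (hp : ∀ i j, 0 < p i j) (hphat : ∀ i j, 0 < phat i j) :
    MS p (ssgAssign p phat xhat) ≤ (n : ℝ) ^ 2 * OPT p := by
  have hp_nonneg : ∀ i j, 0 ≤ p i j := fun i j => (hp i j).le
  rw [sq]
  exact MS_le_mul_OPT_of_forall_le_mul hp_nonneg n.cast_nonneg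
    fun i j => processingTime_ssgAssign_le phat xhat i j hp_nonneg
end
end
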